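/- Let G be a γ-expanding projection game for some γ ∈ (0,1], and suppose λ₊(G) > 1 − ε for some ε ≥ 0. Then the collision value satisfies ‖G‖² ≥ 1 − 36ε/γ − 18ε. -/

import Mathlib

open Finset

/-- A projection game: finite nonempty question sets `Q1` (Alice) and `Q2` (Bob),
a finite nonempty alphabet `A`, and a probability mass function `μ` on triples
`(u, v, π)` where `π : A → Option A` encodes a projection constraint
(the answer pair `(α, β)` satisfies `π` iff `π β = some α`). -/
structure ProjGame where
  Q1 : Type
  Q2 : Type
  A : Type
  [fQ1 : Fintype Q1]
  [fQ2 : Fintype Q2]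
  [fA : Fintype A]
  [neQ1 : Nonempty Q1]
  [neQ2 : Nonempty Q2]
  [neA : Nonempty A]
  [dQ1 : DecidableEq Q1]
  [dQ2 : DecidableEq Q2]
  [dA : DecidableEq A]
  μ : Q1 × Q2 × (A → Option A) → ℝ
  μ_nonneg : ∀ x, 0 ≤ μ x
  μ_sum : ∑ x, μ x = 1

attribute [instance] ProjGame.fQ1 ProjGame.fQ2 ProjGame.fA
  ProjGame.neQ1 ProjGame.neQ2 ProjGame.neA ProjGame.dQ1 ProjGame.dQ2 ProjGame.dA

namespace ProjGame

variable (G : ProjGame)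

/-- The `U`-marginal (Alice-side marginal) of `μ`. -/
noncomputable def wU (u : G.Q1) : ℝ := ∑ v, ∑ π, G.μ (u, v, π)

/-- The `V`-marginal (Bob-side marginal) of `μ`. -/
noncomputable def wV (v : G.Q2) : ℝ := ∑ u, ∑ π, G.μ (u, v, π)

/-- The game operator: `(Gf)(u,α) = E_{(v,π)|u} [∑_{β : π β = some α} f (v,β)]`. -/
noncomputable def op (f : G.Q2 × G.A → ℝ) : G.Q1 × G.A → ℝ :=
  fun p =>
    (∑ v, ∑ π, G.μ (p.1, v, π) * ∑ β, if π β = some p.2 then f (v, β) else 0) / G.wU p.1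

/-- Squared norm on functions on `U × Σ`: `‖g‖² = E_u [∑_α g(u,α)²]`. -/
noncomputable def normUsq (g : G.Q1 × G.A → ℝ) : ℝ := ∑ u, G.wU u * ∑ α, (g (u, α)) ^ 2

/-- Squared norm on functions on `V × Σ`: `‖f‖² = E_v [∑_β f(v,β)²]`. -/
noncomputable def normVsq (f : G.Q2 × G.A → ℝ) : ℝ := ∑ v, G.wV v * ∑ β, (f (v, β)) ^ 2

/-- Inner product `⟨g, g'⟩ = E_u [∑_α g(u,α) g'(u,α)]`. -/
noncomputable def inn (g g' : G.Q1 × G.A → ℝ) : ℝ :=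
  ∑ u, G.wU u * ∑ α, g (u, α) * g' (u, α)

/-- An assignment for Bob. -/
def IsBob (f : G.Q2 × G.A → ℝ) : Prop := (∀ p, 0 ≤ f p) ∧ ∀ v, ∑ β, f (v, β) = 1

/-- An assignment for Alice. -/
def IsAlice (g : G.Q1 × G.A → ℝ) : Prop := (∀ p, 0 ≤ g p) ∧ ∀ u, ∑ α, g (u, α) = 1

/-- The value of the game: `val(G) = max ⟨g, Gf⟩` over assignments. -/
noncomputable def val : ℝ :=
  sSup { x | ∃ f g, G.IsBob f ∧ G.IsAlice g ∧ x = G.inn g (G.op f) }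

/-- The collision value `‖G‖ = max_f ‖Gf‖` over assignments `f` for Bob. -/
noncomputable def collVal : ℝ :=
  sSup { x | ∃ f, G.IsBob f ∧ x = Real.sqrt (G.normUsq (G.op f)) }

/-- Product of projection constraints. -/
def tensorC {A A' : Type} (π : A → Option A) (π' : A' → Option A') :
    A × A' → Option (A × A') :=
  fun b => (π b.1).bind fun a => (π' b.2).map fun a' => (a, a')

/-- The product (parallel repetition) of two projection games. -/
noncomputable def tensor (G H : ProjGame) : ProjGame where
  Q1 := G.Q1 × H.Q1
  Q2 := G.Q2 × H.Q2
  A := G.A × H.A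
  μ := fun x =>
    ∑ y : (G.Q1 × G.Q2 × (G.A → Option G.A)) × (H.Q1 × H.Q2 × (H.A → Option H.A)),
      if ((y.1.1, y.2.1), (y.1.2.1, y.2.2.1), tensorC y.1.2.2 y.2.2.2) = x
      then G.μ y.1 * H.μ y.2 else 0
  μ_nonneg := by
    intro x
    refine Finset.sum_nonneg fun y _ => ?_
    split
    · exact mul_nonneg (G.μ_nonneg _) (H.μ_nonneg _)
    · exact le_refl 0
  μ_sum := by
    rw [Finset.sum_comm]
    simp only [Finset.sum_ite_eq, Finset.mem_univ, if_true]
    rw [Fintype.sum_prod_type]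
    calc (∑ y1, ∑ y2, G.μ y1 * H.μ y2)
        = (∑ y1, G.μ y1) * (∑ y2, H.μ y2) := by rw [Finset.sum_mul_sum]
      _ = 1 := by rw [G.μ_sum, H.μ_sum, mul_one]

/-- `G.iterTensor k` is the `(k+1)`-fold parallel repetition `G^{⊗(k+1)}`. -/
noncomputable def iterTensor (G : ProjGame) : ℕ → ProjGame
  | 0 => G
  | n + 1 => G.tensor (G.iterTensor n)

/-- `val₊(G)`: supremum of values of vector assignments. -/
noncomputable def valPlus (G : ProjGame) : ℝ :=
  sSup { x | ∃ n : ℕ, 0 < n ∧ ∃ f : G.Q2 × G.A → Fin n → ℝ,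
    (∀ p i, 0 ≤ f p i) ∧
    (∀ v, Real.sqrt (∑ i, (∑ β, f (v, β) i) ^ 2) ≤ 1) ∧
    x = Real.sqrt (∑ u, G.wU u * ∑ α, ∑ i, (G.op (fun q => f q i) (u, α)) ^ 2) }

/-- `‖Th‖² = E_v [(∑_β h(v,β))²]`. -/
noncomputable def Tnormsq (G : ProjGame) (h : G.Q2 × G.A → ℝ) : ℝ :=
  ∑ v, G.wV v * (∑ β, h (v, β)) ^ 2

/-- `λ₊(G)`: supremum of `‖Gh‖/‖Th‖` over nonnegative `h` with `‖Th‖ > 0`. -/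
noncomputable def lambdaPlus (G : ProjGame) : ℝ :=
  sSup { x | ∃ h : G.Q2 × G.A → ℝ, (∀ p, 0 ≤ h p) ∧
    0 < Real.sqrt (G.Tnormsq h) ∧
    x = Real.sqrt (G.normUsq (G.op h)) / Real.sqrt (G.Tnormsq h) }

/-- The symmetrized distribution on `V × V` (with the constraints marginalized out). -/
noncomputable def msym (G : ProjGame) (v v' : G.Q2) : ℝ :=
  ∑ u, ((∑ π, G.μ (u, v, π)) * (∑ π', G.μ (u, v', π'))) / G.wU u

/-- `G` is `γ`-expanding: the Markov operator of the symmetrized constraint graph has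
spectral gap at least `γ`, i.e. `|⟨x, Ax⟩| ≤ (1-γ) E_v[x(v)²]` for mean-zero `x`. -/
def IsExpanding (G : ProjGame) (γ : ℝ) : Prop :=
  ∀ x : G.Q2 → ℝ, (∑ v, G.wV v * x v) = 0 →
    |∑ v, ∑ v', G.msym v v' * x v * x v'| ≤ (1 - γ) * ∑ v, G.wV v * (x v) ^ 2

/-- The symmetrized distribution on `(v, v', π, π')`. -/
noncomputable def msymFull (G : ProjGame) (v v' : G.Q2) (π π' : G.A → Option G.A) : ℝ :=
  ∑ u, (G.μ (u, v, π) * G.μ (u, v', π')) / G.wU u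

/-- The value of the assignment `x` in the symmetrized game `G_sym`. -/
noncomputable def symValAssign (G : ProjGame) (x : G.Q2 → G.A) : ℝ :=
  ∑ v, ∑ v', ∑ π, ∑ π', G.msymFull v v' π π' *
    (if ∃ α, π (x v) = some α ∧ π' (x v') = some α then 1 else 0)

/-- The value of the symmetrized game `G_sym`. -/
noncomputable def symVal (G : ProjGame) : ℝ :=
  sSup { r | ∃ x : G.Q2 → G.A, r = G.symValAssign x }

end ProjGame

/-!
Write a nonnegative `h` as `x · f` with `x = Th` and `f` an assignment for Bob. If `c` is the
probability that `f` gives colliding answers on a pair drawn from the symmetrized game, then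
`‖Gf‖² = E[c]` and `‖Gh‖² = E[x(v) x(v') c]`, while `⟨x, Ax⟩ = E[x(v) x(v')]`. With `m = E[x]`,
integrating `m² (1 - c) ≤ 2 x(v) x(v') (1 - c) + (x(v) - m)² + (x(v') - m)²` gives
`m² (1 - ‖Gf‖²) ≤ 2 (⟨x, Ax⟩ - ‖Gh‖²) + 2 Var x`. Expansion means
`γ Var x ≤ ‖Th‖² - ⟨x, Ax⟩`, and since `m² = ‖Th‖² - Var x` the two combine to
`γ ‖Th‖² (1 - ‖Gf‖²) ≤ 3 (‖Th‖² - ‖Gh‖²)`.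
-/

namespace ProjGame

variable (G : ProjGame)

/-- Everything in a triple `(u, v, π)` besides Alice's question: Bob's question and the
projection constraint. -/
abbrev Edge : Type := G.Q2 × (G.A → Option G.A)

theorem wU_eq_sum_edge (u : G.Q1) : G.wU u = ∑ e : G.Edge, G.μ (u, e) := by
  rw [wU, Fintype.sum_prod_type]

theorem wU_nonneg (u : G.Q1) : 0 ≤ G.wU u :=
  sum_nonneg fun _ _ => sum_nonneg fun _ _ => G.μ_nonneg _

theorem wV_nonneg (v : G.Q2) : 0 ≤ G.wV v :=
  sum_nonneg fun _ _ => sum_nonneg fun _ _ => G.μ_nonneg _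

theorem sum_wV : ∑ v, G.wV v = 1 := by
  simp_rw [← G.μ_sum, Fintype.sum_prod_type, wV]
  exact sum_comm

theorem μ_mul_wU_div_wU (u : G.Q1) (e : G.Edge) : G.μ (u, e) * G.wU u / G.wU u = G.μ (u, e) := by
  refine mul_div_cancel_of_imp fun hu => ?_
  rw [wU_eq_sum_edge, sum_eq_zero_iff_of_nonneg fun _ _ => G.μ_nonneg _] at hu
  exact hu e (mem_univ e)

theorem normUsq_nonneg (g : G.Q1 × G.A → ℝ) : 0 ≤ G.normUsq g :=
  sum_nonneg fun u _ => mul_nonneg (G.wU_nonneg u) (sum_nonneg fun _ _ => sq_nonneg _)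

/-- The expectation `E_v[x(v)]` over Bob's question, as a linear functional. -/
noncomputable def bobExp : (G.Q2 → ℝ) →ₗ[ℝ] ℝ where
  toFun x := ∑ v, G.wV v * x v
  map_add' _ _ := by simp only [Pi.add_apply, mul_add, sum_add_distrib]
  map_smul' _ _ := by
    simp only [Pi.smul_apply, smul_eq_mul, mul_sum, mul_left_comm, RingHom.id_apply]

theorem bobExp_apply (x : G.Q2 → ℝ) : G.bobExp x = ∑ v, G.wV v * x v := rfl

theorem bobExp_one : G.bobExp 1 = 1 := by
  simp only [bobExp_apply, Pi.one_apply, mul_one, sum_wV]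

theorem bobExp_nonneg {x : G.Q2 → ℝ} (hx : 0 ≤ x) : 0 ≤ G.bobExp x :=
  sum_nonneg fun v _ => mul_nonneg (G.wV_nonneg v) (hx v)

/-- The variance of `x(v)` over Bob's question `v`. -/
noncomputable def bobVar (x : G.Q2 → ℝ) : ℝ := G.bobExp fun v => (x v - G.bobExp x) ^ 2

theorem bobVar_nonneg (x : G.Q2 → ℝ) : 0 ≤ G.bobVar x :=
  G.bobExp_nonneg fun _ => sq_nonneg _

theorem bobVar_eq (x : G.Q2 → ℝ) : G.bobVar x = G.bobExp (x ^ 2) - G.bobExp x ^ 2 := by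
  have expand : (fun v => (x v - G.bobExp x) ^ 2)
      = x ^ 2 - (2 * G.bobExp x) • x + G.bobExp x ^ 2 • (1 : G.Q2 → ℝ) := by
    ext v
    simp only [Pi.add_apply, Pi.sub_apply, Pi.pow_apply, Pi.smul_apply, Pi.one_apply, smul_eq_mul]
    ring
  rw [bobVar, expand]
  simp only [map_add, map_sub, map_smul, bobExp_one, smul_eq_mul]
  ring

/-- The expectation over the symmetrized distribution on pairs `((v, π), (v', π'))`, as a linear
functional. -/
noncomputable def symExp : (G.Edge → G.Edge → ℝ) →ₗ[ℝ] ℝ where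
  toFun F := ∑ e, ∑ e', G.msymFull e.1 e'.1 e.2 e'.2 * F e e'
  map_add' _ _ := by simp only [Pi.add_apply, mul_add, sum_add_distrib]
  map_smul' _ _ := by
    simp only [Pi.smul_apply, smul_eq_mul, mul_sum, mul_left_comm, RingHom.id_apply]

theorem symExp_apply (F : G.Edge → G.Edge → ℝ) :
    G.symExp F = ∑ e, ∑ e', G.msymFull e.1 e'.1 e.2 e'.2 * F e e' := rfl

theorem msymFull_nonneg (v v' : G.Q2) (π π' : G.A → Option G.A) : 0 ≤ G.msymFull v v' π π' :=
  sum_nonneg fun u _ => div_nonneg (mul_nonneg (G.μ_nonneg _) (G.μ_nonneg _)) (G.wU_nonneg u)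

theorem msymFull_comm (v v' : G.Q2) (π π' : G.A → Option G.A) :
    G.msymFull v v' π π' = G.msymFull v' v π' π := by
  simp only [msymFull, mul_comm]

theorem sum_msymFull (e : G.Edge) :
    ∑ e' : G.Edge, G.msymFull e.1 e'.1 e.2 e'.2 = ∑ u, G.μ (u, e) := by
  simp only [msymFull]
  rw [sum_comm]
  refine sum_congr rfl fun u _ => ?_
  rw [← sum_div, ← mul_sum, ← wU_eq_sum_edge, μ_mul_wU_div_wU]

theorem sum_msymFull_constraints (v v' : G.Q2) :
    ∑ π, ∑ π', G.msymFull v v' π π' = G.msym v v' := by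
  simp only [msym, msymFull, sum_mul_sum, sum_div]
  simp_rw [sum_comm (t := (univ : Finset G.Q1))]

theorem symExp_mono : Monotone G.symExp := fun _ _ hFH =>
  sum_le_sum fun e _ => sum_le_sum fun e' _ =>
    mul_le_mul_of_nonneg_left (hFH e e') (G.msymFull_nonneg _ _ _ _)

theorem symExp_fst (x : G.Q2 → ℝ) : G.symExp (fun e _ => x e.1) = G.bobExp x := by
  simp_rw [symExp_apply, ← sum_mul, sum_msymFull, bobExp_apply, wV, sum_mul, Fintype.sum_prod_type]
  exact sum_congr rfl fun v _ => sum_comm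

theorem symExp_snd (x : G.Q2 → ℝ) : G.symExp (fun _ e' => x e'.1) = G.bobExp x := by
  rw [← symExp_fst, symExp_apply, symExp_apply, sum_comm]
  simp_rw [G.msymFull_comm]

theorem symExp_one : G.symExp 1 = 1 :=
  (G.symExp_fst 1).trans G.bobExp_one

/-- The quadratic form `⟨x, Ax⟩` of the Markov operator of the symmetrized constraint graph. -/
noncomputable def symForm (x : G.Q2 → ℝ) : ℝ := G.symExp fun e e' => x e.1 * x e'.1

theorem symForm_eq_sum_msym (x : G.Q2 → ℝ) :
    G.symForm x = ∑ v, ∑ v', G.msym v v' * x v * x v' := by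
  simp_rw [symForm, symExp_apply, ← sum_msymFull_constraints, sum_mul, Fintype.sum_prod_type,
    mul_assoc]
  exact sum_congr rfl fun v _ => sum_comm

theorem symForm_sub_bobExp (x : G.Q2 → ℝ) :
    G.symForm (fun v => x v - G.bobExp x) = G.symForm x - G.bobExp x ^ 2 := by
  set m := G.bobExp x with hm
  have expand : (fun e e' : G.Edge => (x e.1 - m) * (x e'.1 - m))
      = (fun e e' : G.Edge => x e.1 * x e'.1) - m • (fun e _ : G.Edge => x e.1)
        - m • (fun _ e' : G.Edge => x e'.1) + m ^ 2 • (1 : G.Edge → G.Edge → ℝ) := by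
    ext e e'
    simp only [Pi.add_apply, Pi.sub_apply, Pi.smul_apply, Pi.one_apply, smul_eq_mul]
    ring
  rw [symForm, expand]
  simp only [map_add, map_sub, map_smul, symExp_fst, symExp_snd, symExp_one, smul_eq_mul, ← hm,
    symForm]
  ring

variable {G} in
theorem IsExpanding.mul_bobVar_le {γ : ℝ} (hG : G.IsExpanding γ) (x : G.Q2 → ℝ) :
    γ * G.bobVar x ≤ G.bobExp (x ^ 2) - G.symForm x := by
  have mean_zero : G.bobExp (x - G.bobExp x • 1) = 0 := by
    rw [map_sub, map_smul, bobExp_one, smul_eq_mul, mul_one, sub_self]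
  have gap : G.symForm (fun v => x v - G.bobExp x) ≤ (1 - γ) * G.bobVar x := by
    rw [symForm_eq_sum_msym]
    refine (le_abs_self _).trans (hG _ ?_)
    simpa [bobExp_apply] using mean_zero
  rw [symForm_sub_bobExp] at gap
  linarith [G.bobVar_eq x]

/-- The inner sum `∑_{β : π β = some α} f(v, β)` of the game operator: the weight that `f` gives
to the label `α` once the answers to `v` are projected along `π`. -/
noncomputable def project (f : G.Q2 × G.A → ℝ) (e : G.Edge) (α : G.A) : ℝ :=
  ∑ β, if e.2 β = some α then f (e.1, β) else 0

/-- The probability that independent answers drawn from `f` at the two ends of a pair of the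
symmetrized game project to the same label. -/
noncomputable def collision (f : G.Q2 × G.A → ℝ) (e e' : G.Edge) : ℝ :=
  ∑ α, G.project f e α * G.project f e' α

theorem normUsq_op (f : G.Q2 × G.A → ℝ) : G.normUsq (G.op f) = G.symExp (G.collision f) := by
  have op_eq (u : G.Q1) (α : G.A) :
      G.op f (u, α) = (∑ e, G.μ (u, e) * G.project f e α) / G.wU u := by
    rw [op, Fintype.sum_prod_type]
    rfl
  have cond (u : G.Q1) : G.wU u * ∑ α, G.op f (u, α) ^ 2
      = ∑ e, ∑ e', G.μ (u, e) * G.μ (u, e') / G.wU u * G.collision f e e' := by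
    have cancel (s : ℝ) : G.wU u * (s / G.wU u) ^ 2 = s * s / G.wU u := by
      rcases eq_or_ne (G.wU u) 0 with hu | hu
      · simp [hu]
      · field_simp
    simp_rw [op_eq, mul_sum, cancel, sum_mul_sum, sum_div, collision, mul_sum]
    rw [sum_comm]
    refine sum_congr rfl fun e _ => sum_comm.trans ?_
    exact sum_congr rfl fun e' _ => sum_congr rfl fun α _ => by ring
  simp_rw [normUsq, cond, symExp_apply, msymFull, sum_mul]
  rw [sum_comm]
  exact sum_congr rfl fun e _ => sum_comm

theorem collision_mul (x : G.Q2 → ℝ) (f : G.Q2 × G.A → ℝ) (e e' : G.Edge) :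
    G.collision (fun p => x p.1 * f p) e e' = x e.1 * x e'.1 * G.collision f e e' := by
  have project_mul (e : G.Edge) (α : G.A) :
      G.project (fun p => x p.1 * f p) e α = x e.1 * G.project f e α := by
    simp only [project, mul_sum, mul_ite, mul_zero]
  simp only [collision, project_mul, mul_sum, mul_mul_mul_comm]

theorem project_nonneg {f : G.Q2 × G.A → ℝ} (hf : 0 ≤ f) (e : G.Edge) (α : G.A) :
    0 ≤ G.project f e α :=
  sum_nonneg fun _ _ => ite_nonneg (hf _) le_rfl

theorem collision_nonneg {f : G.Q2 × G.A → ℝ} (hf : 0 ≤ f) (e e' : G.Edge) :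
    0 ≤ G.collision f e e' :=
  sum_nonneg fun α _ => mul_nonneg (G.project_nonneg hf e α) (G.project_nonneg hf e' α)

theorem sq_mul_one_sub_le (a b m : ℝ) {c : ℝ} (hc0 : 0 ≤ c) (hc1 : c ≤ 1) :
    m ^ 2 * (1 - c) ≤ 2 * (a * b - a * b * c) + (a - m) ^ 2 + (b - m) ^ 2 := by
  have gap_nonneg : 0 ≤ (1 - c) * (a + b - m) ^ 2 + c * ((a - m) ^ 2 + (b - m) ^ 2) :=
    add_nonneg (mul_nonneg (sub_nonneg.mpr hc1) (sq_nonneg _)) (by positivity)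
  linear_combination gap_nonneg

namespace IsBob

variable {G} {f : G.Q2 × G.A → ℝ} (hf : G.IsBob f)
include hf

theorem sum_project_le_one (e : G.Edge) : ∑ α, G.project f e α ≤ 1 := by
  simp only [project]
  rw [sum_comm, ← hf.2 e.1]
  refine sum_le_sum fun β _ => ?_
  cases e.2 β with
  | none => simpa using hf.1 _
  | some _ => simp

theorem collision_le_one (e e' : G.Edge) : G.collision f e e' ≤ 1 := by
  have project_le_one (α : G.A) : G.project f e' α ≤ 1 :=
    (single_le_sum (fun α _ => G.project_nonneg hf.1 e' α) (mem_univ α)).trans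
      (hf.sum_project_le_one e')
  calc G.collision f e e' ≤ ∑ α, G.project f e α :=
        sum_le_sum fun α _ =>
          mul_le_of_le_one_right (G.project_nonneg hf.1 e α) (project_le_one α)
    _ ≤ 1 := hf.sum_project_le_one e

theorem normUsq_op_mul_le {x : G.Q2 → ℝ} (hx : 0 ≤ x) :
    G.normUsq (G.op fun p => x p.1 * f p) ≤ G.symForm x := by
  rw [normUsq_op]
  refine G.symExp_mono fun e e' => ?_
  rw [collision_mul]
  exact mul_le_of_le_one_right (mul_nonneg (hx _) (hx _)) (hf.collision_le_one e e')

theorem normUsq_op_le_one : G.normUsq (G.op f) ≤ 1 := by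
  rw [normUsq_op, ← symExp_one]
  exact G.symExp_mono hf.collision_le_one

theorem normUsq_op_le_collVal_sq : G.normUsq (G.op f) ≤ G.collVal ^ 2 := by
  have bdd : BddAbove {x | ∃ f, G.IsBob f ∧ x = √(G.normUsq (G.op f))} := by
    refine ⟨1, ?_⟩
    rintro _ ⟨f, hf, rfl⟩
    exact Real.sqrt_le_one.mpr hf.normUsq_op_le_one
  exact (Real.sqrt_le_iff.mp (le_csSup bdd ⟨f, hf, rfl⟩)).2

theorem sq_mul_one_sub_normUsq_op_le (x : G.Q2 → ℝ) (m : ℝ) :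
    m ^ 2 * (1 - G.normUsq (G.op f))
      ≤ 2 * (G.symForm x - G.normUsq (G.op fun p => x p.1 * f p))
        + 2 * G.bobExp fun v => (x v - m) ^ 2 := by
  set dev : G.Q2 → ℝ := fun v => (x v - m) ^ 2
  have pointwise : m ^ 2 • (1 - G.collision f)
      ≤ (2 : ℝ) • ((fun e e' => x e.1 * x e'.1) - G.collision fun p => x p.1 * f p)
        + (fun e _ => dev e.1) + (fun _ e' => dev e'.1) := by
    intro e e'
    simp only [Pi.add_apply, Pi.sub_apply, Pi.smul_apply, Pi.one_apply, smul_eq_mul, collision_mul,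
      dev]
    exact sq_mul_one_sub_le (x e.1) (x e'.1) m (G.collision_nonneg hf.1 e e')
      (hf.collision_le_one e e')
  have integrated := G.symExp_mono pointwise
  simp only [map_add, map_sub, map_smul, symExp_fst, symExp_snd, symExp_one, smul_eq_mul,
    ← normUsq_op] at integrated
  rw [symForm]
  linarith

end IsBob

/-- The operator `T` of the paper, `(Th)(v) = ∑_β h(v, β)`. -/
def mass (h : G.Q2 × G.A → ℝ) (v : G.Q2) : ℝ := ∑ β, h (v, β)

theorem mass_nonneg {h : G.Q2 × G.A → ℝ} (hh : 0 ≤ h) : 0 ≤ G.mass h :=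
  fun _ => sum_nonneg fun _ _ => hh _

theorem exists_isBob_eq_mass_mul {h : G.Q2 × G.A → ℝ} (hh : 0 ≤ h) :
    ∃ f, G.IsBob f ∧ h = fun p => G.mass h p.1 * f p := by
  have exists_dist (v : G.Q2) : ∃ d : G.A → ℝ,
      0 ≤ d ∧ ∑ β, d β = 1 ∧ ∀ β, h (v, β) = G.mass h v * d β := by
    by_cases hv : G.mass h v = 0
    · refine ⟨Pi.single (Classical.arbitrary G.A) 1, Pi.single_nonneg.mpr zero_le_one, by simp,
        fun β => ?_⟩
      rw [hv, zero_mul]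
      exact (sum_eq_zero_iff_of_nonneg fun β _ => hh (v, β)).mp hv β (mem_univ β)
    · refine ⟨fun β => h (v, β) / G.mass h v, fun β => div_nonneg (hh _) (G.mass_nonneg hh v), ?_,
        fun β => (mul_div_cancel₀ _ hv).symm⟩
      rw [← sum_div]
      exact div_self hv
  choose d d_nonneg sum_d h_eq using exists_dist
  exact ⟨fun p => d p.1 p.2, ⟨fun p => d_nonneg p.1 p.2, sum_d⟩, funext fun p => h_eq p.1 p.2⟩

namespace IsExpanding

variable {G} {γ : ℝ} (hG : G.IsExpanding γ) (hγ0 : 0 ≤ γ) (hγ1 : γ ≤ 1)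
include hG hγ0 hγ1

theorem mul_one_sub_normUsq_op_le {f : G.Q2 × G.A → ℝ} (hf : G.IsBob f) {x : G.Q2 → ℝ}
    (hx : 0 ≤ x) :
    γ * (G.bobExp (x ^ 2) * (1 - G.normUsq (G.op f)))
      ≤ 3 * (G.bobExp (x ^ 2) - G.normUsq (G.op fun p => x p.1 * f p)) := by
  set N := G.bobExp (x ^ 2)
  set R := G.normUsq (G.op f)
  set S := G.normUsq (G.op fun p => x p.1 * f p)
  have gap : γ * G.bobVar x ≤ N - G.symForm x := hG.mul_bobVar_le x
  have op_le : S ≤ G.symForm x := hf.normUsq_op_mul_le hx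
  have mean_sq : G.bobExp x ^ 2 = N - G.bobVar x := by rw [bobVar_eq, sub_sub_cancel]
  have rounding : G.bobExp x ^ 2 * (1 - R) ≤ 2 * (G.symForm x - S) + 2 * G.bobVar x :=
    hf.sq_mul_one_sub_normUsq_op_le x (G.bobExp x)
  have var_mul_le : G.bobVar x * (1 - R) ≤ G.bobVar x :=
    mul_le_of_le_one_right (G.bobVar_nonneg x) (sub_le_self 1 (G.normUsq_nonneg _))
  calc γ * (N * (1 - R))
      ≤ γ * (2 * (G.symForm x - S) + 3 * G.bobVar x) := by
        gcongr
        rw [mean_sq] at rounding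
        linarith
    _ = 2 * γ * (G.symForm x - S) + 3 * (γ * G.bobVar x) := by ring
    _ ≤ 3 * (G.symForm x - S) + 3 * (N - G.symForm x) :=
        add_le_add (mul_le_mul_of_nonneg_right (by linarith) (sub_nonneg.mpr op_le))
          (by linarith)
    _ = 3 * (N - S) := by ring

theorem mul_one_sub_collVal_sq_le {h : G.Q2 × G.A → ℝ} (hh : 0 ≤ h) :
    γ * (G.Tnormsq h * (1 - G.collVal ^ 2)) ≤ 3 * (G.Tnormsq h - G.normUsq (G.op h)) := by
  obtain ⟨f, hf, h_eq⟩ := G.exists_isBob_eq_mass_mul hh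
  have norm_nonneg : 0 ≤ G.Tnormsq h := G.bobExp_nonneg fun _ => sq_nonneg _
  calc γ * (G.Tnormsq h * (1 - G.collVal ^ 2))
      ≤ γ * (G.Tnormsq h * (1 - G.normUsq (G.op f))) := by
        gcongr
        exact hf.normUsq_op_le_collVal_sq
    _ ≤ 3 * (G.Tnormsq h - G.normUsq (G.op fun p => G.mass h p.1 * f p)) :=
        hG.mul_one_sub_normUsq_op_le hγ0 hγ1 hf (G.mass_nonneg hh)
    _ = 3 * (G.Tnormsq h - G.normUsq (G.op h)) := by rw [← h_eq]

end IsExpanding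

variable {G} in
theorem lambdaPlus_sq_le {B : ℝ} (hB : 0 ≤ B)
    (hop : ∀ h, 0 ≤ h → G.normUsq (G.op h) ≤ B * G.Tnormsq h) : G.lambdaPlus ^ 2 ≤ B := by
  have lambdaPlus_nonneg : 0 ≤ G.lambdaPlus := by
    refine Real.sSup_nonneg ?_
    rintro _ ⟨h, -, -, rfl⟩
    positivity
  refine (Real.le_sqrt lambdaPlus_nonneg hB).mp (Real.sSup_le ?_ (Real.sqrt_nonneg B))
  rintro _ ⟨h, hh, hT, rfl⟩
  rw [div_le_iff₀ hT, ← Real.sqrt_mul hB]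
  exact Real.sqrt_le_sqrt (hop h hh)

end ProjGame

theorem expanding_approximation_general (G : ProjGame) (γ : ℝ) (hγ0 : 0 < γ) (hγ1 : γ ≤ 1)
    (hexp : G.IsExpanding γ) : 1 - 3 * (1 - G.lambdaPlus ^ 2) / γ ≤ G.collVal ^ 2 := by
  have bound : G.lambdaPlus ^ 2 ≤ 1 - γ * (1 - G.collVal ^ 2) / 3 := by
    refine ProjGame.lambdaPlus_sq_le ?_ fun h hh => ?_
    · nlinarith [sq_nonneg G.collVal]
    · linarith [hexp.mul_one_sub_collVal_sq_le hγ0.le hγ1 hh]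
  rw [sub_le_comm, le_div_iff₀ hγ0]
  linarith

/-- **Approximation bound for expanding projection games.** If `G` is `γ`-expanding
and `λ₊(G) > 1 - ε`, then `‖G‖² ≥ 1 - 36ε/γ - 18ε`. -/
theorem expanding_approximation (G : ProjGame) (γ ε : ℝ) (hγ0 : 0 < γ) (hγ1 : γ ≤ 1)
    (hexp : G.IsExpanding γ) (hε : 0 ≤ ε) (hlam : 1 - ε < G.lambdaPlus) :
    1 - 36 * ε / γ - 18 * ε ≤ G.collVal ^ 2 := by
  have defect_le : 3 * (1 - G.lambdaPlus ^ 2) / γ ≤ 36 * ε / γ :=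
    div_le_div_of_nonneg_right (by nlinarith [sq_nonneg (1 - G.lambdaPlus)]) hγ0.le
  linarith [expanding_approximation_general G γ hγ0 hγ1 hexp]
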